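/- arXiv:2204.08419 — 3 statements merged into one kernel-verified Lean document; each statement's English description precedes it below -/
import Mathlib

section
/- Let (F,G) be a dual pair in an n-dimensional complex Hilbert space H with weight numbers (q_i), and suppose ⟨f_i, g_i⟩ = 1/q_i for every 1 ≤ i ≤ N. Then for every i ≠ j, the spectral radius of the two-erasure error operator E_{ij} f = q_i ⟨f, f_i⟩ g_i + q_j ⟨f, f_j⟩ g_j equals max{ |1 + w| : w ∈ ℂ, w² = q_i q_j ⟨g_i, f_j⟩⟨g_j, f_i⟩ }. Consequently R_2^p(F,G) = max_{i ≠ j} |1 + w_{ij}|, where w_{ij} denotes the complex square root of q_i q_j ⟨g_i, f_j⟩⟨g_j, f_i⟩ with nonnegative real part. -/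
/-!
The operator `E i j` factors as `B ∘ A` with `A x = (q i * ⟪F i, x⟫, q j * ⟪F j, x⟫)` and
`B (s, t) = s • G i + t • G j`, so its nonzero eigenvalues are those of the `2 × 2` matrix `A ∘ B`.
The hypothesis on the diagonal inner products makes that matrix `!![1, β; γ, 1]` with
`β * γ = c := q i * q j * ⟪F j, G i⟫ * ⟪F i, G j⟫`, so the nonzero spectrum of `E i j` consists of
the nonzero numbers `1 + w` with `w ^ 2 = c` (`mem_spectrum_two_rank_iff`). The eigenvalue zero
does not affect the spectral radius. Of the two square roots `± w` of `c`, the one with nonnegative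
real part is at least as far from `-1` as the other (`iSup_sq_eq_norm_one_add_cpow`).
-/

open scoped InnerProductSpace ENNReal

/-- The spectrum of an operator on a finite-dimensional space consists of its eigenvalues. -/
lemma mem_spectrum_iff_exists_eigenvector {H : Type*} [NormedAddCommGroup H]
    [InnerProductSpace ℂ H] [FiniteDimensional ℂ H] (T : H →L[ℂ] H) (μ : ℂ) :
    μ ∈ spectrum ℂ T ↔ ∃ x : H, x ≠ 0 ∧ T x = μ • x := by
  rw [← AlgEquiv.spectrum_eq (Module.End.toContinuousLinearMap (𝕜 := ℂ) H).symm T,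
    ← Module.End.hasEigenvalue_iff_mem_spectrum]
  constructor
  · intro h
    obtain ⟨x, hx⟩ := h.exists_hasEigenvector
    exact ⟨x, hx.2, hx.apply_eq_smul⟩
  · rintro ⟨x, hx0, hx⟩
    exact Module.End.hasEigenvalue_of_hasEigenvector
      (Module.End.hasEigenvector_iff.mpr ⟨Module.End.mem_eigenspace_iff.mpr hx, hx0⟩)

/-- The nonzero spectrum of an operator of rank at most two whose associated `2 × 2` matrix has unit
diagonal: the characteristic equation of that matrix is `(μ - 1) ^ 2 = β * γ`, where `β` and `γ`
are the off-diagonal entries. -/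
lemma mem_spectrum_two_rank_iff {H : Type*} [NormedAddCommGroup H]
    [InnerProductSpace ℂ H] [FiniteDimensional ℂ H] (T : H →L[ℂ] H) (f₁ f₂ g₁ g₂ : H) (a b : ℂ)
    (hT : ∀ x, T x = (a * ⟪f₁, x⟫_ℂ) • g₁ + (b * ⟪f₂, x⟫_ℂ) • g₂)
    (h₁ : a * ⟪f₁, g₁⟫_ℂ = 1) (h₂ : b * ⟪f₂, g₂⟫_ℂ = 1) {μ : ℂ} (hμ : μ ≠ 0) :
    μ ∈ spectrum ℂ T ↔ (μ - 1) ^ 2 = a * b * ⟪f₂, g₁⟫_ℂ * ⟪f₁, g₂⟫_ℂ := by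
  rw [mem_spectrum_iff_exists_eigenvector]
  constructor
  · rintro ⟨x, hx0, hx⟩
    rw [hT] at hx
    -- `u` and `v` are the coordinates of `A x`; they form an eigenvector of the matrix of `A ∘ B`,
    -- where `A x = (a * ⟪f₁, x⟫, b * ⟪f₂, x⟫)` and `B (s, t) = s • g₁ + t • g₂`.
    set u := a * ⟪f₁, x⟫_ℂ with hu
    set v := b * ⟪f₂, x⟫_ℂ with hv
    have e₁ := congrArg (fun y => a * ⟪f₁, y⟫_ℂ) hx
    have e₂ := congrArg (fun y => b * ⟪f₂, y⟫_ℂ) hx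
    simp only [inner_add_right, inner_smul_right] at e₁ e₂
    have e₁' : (μ - 1) * u = v * (a * ⟪f₁, g₂⟫_ℂ) := by
      linear_combination -e₁ + u * h₁ + μ * hu
    have e₂' : (μ - 1) * v = u * (b * ⟪f₂, g₁⟫_ℂ) := by
      linear_combination -e₂ + v * h₂ + μ * hv
    by_cases hu0 : u = 0
    · have hv0 : v ≠ 0 := by
        intro hv0
        rw [hu0, hv0] at hx
        simp only [zero_smul, add_zero] at hx
        exact (smul_ne_zero hμ hx0) hx.symm
      apply mul_right_cancel₀ hv0
      linear_combination (μ - 1) * e₂' + (b * ⟪f₂, g₁⟫_ℂ) * e₁'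
    · apply mul_right_cancel₀ hu0
      linear_combination (μ - 1) * e₁' + (a * ⟪f₁, g₂⟫_ℂ) * e₂'
  · intro h
    -- An eigenvector `(s, t)` of the `2 × 2` matrix is mapped by `B` to an eigenvector of `T`.
    obtain ⟨s, t, hst, e₁, e₂⟩ : ∃ s t : ℂ, (s ≠ 0 ∨ t ≠ 0) ∧
        s + t * (a * ⟪f₁, g₂⟫_ℂ) = μ * s ∧ s * (b * ⟪f₂, g₁⟫_ℂ) + t = μ * t := by
      by_cases hβ : a * ⟪f₁, g₂⟫_ℂ = 0
      · have hw : μ - 1 = 0 := by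
          have : (μ - 1) ^ 2 = 0 := by linear_combination h + b * ⟪f₂, g₁⟫_ℂ * hβ
          exact pow_eq_zero_iff two_ne_zero |>.mp this
        exact ⟨0, 1, Or.inr one_ne_zero, by simp [hβ], by linear_combination -hw⟩
      · exact ⟨a * ⟪f₁, g₂⟫_ℂ, μ - 1, Or.inl hβ, by ring, by linear_combination -h⟩
    have c₁ : a * ⟪f₁, s • g₁ + t • g₂⟫_ℂ = μ * s := by
      simp only [inner_add_right, inner_smul_right]
      linear_combination e₁ + s * h₁
    have c₂ : b * ⟪f₂, s • g₁ + t • g₂⟫_ℂ = μ * t := by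
      simp only [inner_add_right, inner_smul_right]
      linear_combination e₂ + t * h₂
    refine ⟨s • g₁ + t • g₂, ?_, ?_⟩
    · intro h0
      rw [h0, inner_zero_right, mul_zero] at c₁ c₂
      rcases hst with hs | ht
      · exact mul_ne_zero hμ hs c₁.symm
      · exact mul_ne_zero hμ ht c₂.symm
    · rw [hT, c₁, c₂, smul_add, smul_smul, smul_smul]

lemma spectralRadius_two_rank {H : Type*} [NormedAddCommGroup H]
    [InnerProductSpace ℂ H] [FiniteDimensional ℂ H] (T : H →L[ℂ] H) (f₁ f₂ g₁ g₂ : H) (a b : ℂ)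
    (hT : ∀ x, T x = (a * ⟪f₁, x⟫_ℂ) • g₁ + (b * ⟪f₂, x⟫_ℂ) • g₂)
    (h₁ : a * ⟪f₁, g₁⟫_ℂ = 1) (h₂ : b * ⟪f₂, g₂⟫_ℂ = 1) :
    spectralRadius ℂ T =
      ⨆ (w : ℂ) (_ : w ^ 2 = a * b * ⟪f₂, g₁⟫_ℂ * ⟪f₁, g₂⟫_ℂ), ENNReal.ofReal ‖1 + w‖ := by
  unfold spectralRadius
  apply le_antisymm
  · refine iSup₂_le fun μ hμ => ?_
    by_cases h0 : μ = 0
    · simp [h0]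
    · rw [mem_spectrum_two_rank_iff T f₁ f₂ g₁ g₂ a b hT h₁ h₂ h0] at hμ
      refine le_iSup₂_of_le (μ - 1) hμ ?_
      rw [add_sub_cancel, ofReal_norm, enorm_eq_nnnorm]
  · refine iSup₂_le fun w hw => ?_
    by_cases h0 : 1 + w = 0
    · simp [h0]
    · refine le_iSup₂_of_le (1 + w) ?_ ?_
      · rw [mem_spectrum_two_rank_iff T f₁ f₂ g₁ g₂ a b hT h₁ h₂ h0, add_sub_cancel_left]
        exact hw
      · rw [ofReal_norm, enorm_eq_nnnorm]

/-- The principal square root has nonnegative real part, hence it maximises `‖1 + w‖` among the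
square roots `w` of `c`. -/
lemma iSup_sq_eq_norm_one_add_cpow (c : ℂ) :
    (⨆ (w : ℂ) (_ : w ^ 2 = c), ENNReal.ofReal ‖1 + w‖) =
      ENNReal.ofReal ‖1 + c ^ ((1 : ℂ) / 2)‖ := by
  have hsq : (c ^ ((1 : ℂ) / 2)) ^ 2 = c := by
    have := Complex.cpow_nat_inv_pow c two_ne_zero
    rw [one_div]
    exact_mod_cast this
  have hre : 0 ≤ (c ^ ((1 : ℂ) / 2)).re := by
    rw [one_div, Complex.cpow_inv_two_re]
    exact Real.sqrt_nonneg _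
  apply le_antisymm
  · refine iSup₂_le fun w hw => ENNReal.ofReal_le_ofReal ?_
    rcases sq_eq_sq_iff_eq_or_eq_neg.mp (hw.trans hsq.symm) with h | h
    · rw [h]
    · rw [h]
      set z := c ^ ((1 : ℂ) / 2)
      refine (sq_le_sq₀ (norm_nonneg _) (norm_nonneg _)).mp ?_
      rw [Complex.sq_norm, Complex.sq_norm, Complex.normSq_apply, Complex.normSq_apply]
      simp only [Complex.add_re, Complex.add_im, Complex.neg_re, Complex.neg_im, Complex.one_re,
        Complex.one_im]
      nlinarith
  · exact le_iSup₂_of_le _ hsq le_rfl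

/-- For a dual pair `(F,G)` with weight numbers `q` satisfying
`⟨f i, g i⟩ = 1 / q i` for all `i`, the spectral radius of each two-erasure error operator
`E i j : f ↦ q i ⟨f, f i⟩ g i + q j ⟨f, f j⟩ g j` (for `i ≠ j`) equals
`max {|1 + w| : w² = q i q j ⟨g i, f j⟩⟨g j, f i⟩}`, and consequently
`R₂ᵖ(F,G) = max_{i ≠ j} |1 + w i j|` where `w i j` is the principal complex square root
(nonnegative real part), here written as `(·)^(1/2 : ℂ)`.
Paper's `⟨x, y⟩` (linear in the first argument) is Mathlib's `⟪y, x⟫_ℂ`. -/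
theorem two_erasure_spectral_radius_uniform {H : Type*} [NormedAddCommGroup H]
    [InnerProductSpace ℂ H] [FiniteDimensional ℂ H] {n N : ℕ}
    (hn : 1 ≤ n) (hdim : Module.finrank ℂ H = n)
    (p : Fin N → ℝ) (hp0 : ∀ i, 0 ≤ p i) (hp1 : ∀ i, p i < 1) (hpsum : ∑ i, p i = 1)
    (q : Fin N → ℝ) (hq : ∀ i, q i = ((N : ℝ) - 1) / ((n : ℝ) * (1 - p i)))
    (F G : Fin N → H)
    (hdual : ∀ f : H, ∑ i, ⟪F i, f⟫_ℂ • G i = f)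
    (hdiag : ∀ i, ⟪G i, F i⟫_ℂ = ((1 / q i : ℝ) : ℂ))
    (E : Fin N → Fin N → (H →L[ℂ] H))
    (hE : ∀ i j (f : H),
      E i j f = ((q i : ℂ) * ⟪F i, f⟫_ℂ) • G i + ((q j : ℂ) * ⟪F j, f⟫_ℂ) • G j) :
    (∀ i j, i ≠ j → spectralRadius ℂ (E i j) =
      ⨆ (w : ℂ) (_ : w ^ 2 = ((q i * q j : ℝ) : ℂ) * ⟪F j, G i⟫_ℂ * ⟪F i, G j⟫_ℂ),
        ENNReal.ofReal ‖1 + w‖) ∧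
    (⨆ i, ⨆ j, ⨆ (_ : i ≠ j), spectralRadius ℂ (E i j)) =
      ⨆ i, ⨆ j, ⨆ (_ : i ≠ j), ENNReal.ofReal
        ‖1 + (((q i * q j : ℝ) : ℂ) * ⟪F j, G i⟫_ℂ * ⟪F i, G j⟫_ℂ) ^ ((1 : ℂ) / 2)‖ := by
  have hrad : ∀ i j, i ≠ j → spectralRadius ℂ (E i j) =
      ⨆ (w : ℂ) (_ : w ^ 2 = ((q i * q j : ℝ) : ℂ) * ⟪F j, G i⟫_ℂ * ⟪F i, G j⟫_ℂ),
        ENNReal.ofReal ‖1 + w‖ := by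
    intro i j hij
    -- Two distinct indices force `N ≥ 2`, so the weight numbers do not vanish.
    have hN : 1 < N := by
      have := i.isLt
      have := j.isLt
      have : (i : ℕ) ≠ j := fun h => hij (Fin.ext h)
      omega
    have hq0 : ∀ k, q k ≠ 0 := by
      intro k
      have hN' : (1 : ℝ) < N := by exact_mod_cast hN
      have hn' : (0 : ℝ) < n := by exact_mod_cast hn
      have := hp1 k
      rw [hq]
      exact (div_pos (by linarith) (mul_pos hn' (by linarith))).ne'
    have hunit : ∀ k, (q k : ℂ) * ⟪F k, G k⟫_ℂ = 1 := by
      intro k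
      rw [← inner_conj_symm, hdiag, Complex.conj_ofReal, ← Complex.ofReal_mul,
        mul_one_div_cancel (hq0 k), Complex.ofReal_one]
    rw [spectralRadius_two_rank (E i j) (F i) (F j) (G i) (G j) (q i) (q j) (hE i j)
      (hunit i) (hunit j), Complex.ofReal_mul]
  refine ⟨hrad, ?_⟩
  refine iSup_congr fun i => iSup_congr fun j => iSup_congr fun hij => ?_
  rw [hrad i j hij, iSup_sq_eq_norm_one_add_cpow]
end

section
/- Let F = (f_1, …, f_N) be a frame for an n-dimensional complex Hilbert space H with frame operator S_F, and let (q_i) be the weight numbers of a probability sequence. Set c = max_{1 ≤ i ≤ N} q_i ‖f_i‖ ‖S_F^{-1} f_i‖, ϱ_1 = { i : q_i ‖f_i‖ ‖S_F^{-1} f_i‖ = c }, ϱ_2 = {1, …, N} \ ϱ_1, and H_j = span{ f_i : i ∈ ϱ_j }. If H_1 ∩ H_2 = {0} and the family { f_i : i ∈ ϱ_2 } is linearly independent, then the canonical dual is the unique 1-erasure probabilistic optimal dual of F: every dual G of F satisfying max_{1 ≤ i ≤ N} q_i ‖f_i‖ ‖g_i‖ = c must satisfy g_i = S_F^{-1}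 f_i for every 1 ≤ i ≤ N. -/
/-!
Write `u i = G i - S⁻¹ (F i)`, the difference of a competing dual and the canonical one, so that
`∑ ⟪F i, f⟫ • u i = 0` for all `f`. Taking adjoints, `∑ ⟪u i, v⟫ • F i = 0` for all `v`, and the
two hypotheses on the spans force `u i = 0` at every index not attaining `c`. Taking the trace
against an operator `A` gives `∑ ⟪A (F i), u i⟫ = 0`. At the indices attaining `c > 0` the
optimality of `G` gives `‖S⁻¹ (F i) + u i‖ ≤ ‖S⁻¹ (F i)‖`, that is
`‖u i‖² + 2 Re ⟪S⁻¹ (F i), u i⟫ ≤ 0`; this holds trivially where `u i = 0`. Summing over `i` with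
`A = S⁻¹` yields `∑ ‖u i‖² ≤ 0`, so `u = 0`.
-/

open scoped InnerProductSpace

/-- If the synthesis operator of `u` composed with the analysis operator of `F` is zero, then so is
its adjoint. -/
lemma sum_inner_smul_eq_zero_swap {H ι : Type*} [NormedAddCommGroup H]
    [InnerProductSpace ℂ H] [Fintype ι] {F u : ι → H}
    (hu : ∀ f : H, ∑ i, ⟪F i, f⟫_ℂ • u i = 0) (v : H) :
    ∑ i, ⟪u i, v⟫_ℂ • F i = 0 := by
  refine ext_inner_right ℂ fun f => ?_
  have h := congrArg (fun x => ⟪v, x⟫_ℂ) (hu f)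
  simp only [inner_sum, inner_smul_right, inner_zero_right] at h
  simp only [sum_inner, inner_smul_left, inner_conj_symm, inner_zero_left]
  rw [← h]
  exact Finset.sum_congr rfl fun i _ => mul_comm _ _

/-- The trace of `A` times the zero operator `∑ F i ⊗ u i`, computed in an orthonormal basis. -/
lemma sum_inner_map_eq_zero {H ι : Type*} [NormedAddCommGroup H]
    [InnerProductSpace ℂ H] [FiniteDimensional ℂ H] [Fintype ι] {F u : ι → H}
    (hu : ∀ f : H, ∑ i, ⟪F i, f⟫_ℂ • u i = 0) (A : H →ₗ[ℂ] H) :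
    ∑ i, ⟪A (F i), u i⟫_ℂ = 0 := by
  let e := stdOrthonormalBasis ℂ H
  have h1 : ∀ i, ⟪A (F i), u i⟫_ℂ = ∑ k, ⟪A (e k), ⟪F i, e k⟫_ℂ • u i⟫_ℂ := by
    intro i
    conv_lhs => rw [← e.sum_repr' (F i)]
    simp only [map_sum, map_smul, sum_inner, inner_smul_left, inner_smul_right, inner_conj_symm]
  simp_rw [h1]
  rw [Finset.sum_comm]
  refine Finset.sum_eq_zero fun k _ => ?_
  rw [← inner_sum, hu, inner_zero_right]

/-- A vanishing linear combination has zero coefficients on a linearly independent part whose span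
meets the span of the remaining vectors trivially. -/
lemma coeff_eq_zero_of_disjoint {K H ι : Type*} [Field K] [AddCommGroup H] [Module K H]
    [Fintype ι] {F : ι → H} {P : ι → Prop}
    (hsep : Submodule.span K (F '' {i | P i}) ⊓ Submodule.span K (F '' {i | ¬ P i}) = ⊥)
    (hli : LinearIndependent K (fun i : {i : ι // ¬ P i} => F i))
    {a : ι → K} (ha : ∑ i, a i • F i = 0) {i : ι} (hi : ¬ P i) : a i = 0 := by
  classical
  rw [← Fintype.sum_subtype_add_sum_subtype P] at ha
  have h1 : ∑ j : {j // P j}, a j • F j ∈ Submodule.span K (F '' {i | P i}) :=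
    Submodule.sum_mem _ fun j _ => Submodule.smul_mem _ _ (Submodule.subset_span ⟨j, j.2, rfl⟩)
  have h2 : ∑ j : {j // ¬ P j}, a j • F j ∈ Submodule.span K (F '' {i | ¬ P i}) :=
    Submodule.sum_mem _ fun j _ => Submodule.smul_mem _ _ (Submodule.subset_span ⟨j, j.2, rfl⟩)
  have h3 : ∑ j : {j // ¬ P j}, a j • F j = 0 := by
    rw [← Submodule.mem_bot K, ← hsep]
    refine ⟨?_, h2⟩
    rw [eq_neg_of_add_eq_zero_right ha]
    exact Submodule.neg_mem _ h1
  exact Fintype.linearIndependent_iff.1 hli (fun j => a j) h3 ⟨i, hi⟩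

/-- With the notation of Statement 13 (`c = max_i q i ‖f i‖ ‖S⁻¹ f i‖`,
`ϱ₁` the set of indices attaining `c`, `ϱ₂` its complement), if the spans of
`{f i : i ∈ ϱ₁}` and `{f i : i ∈ ϱ₂}` intersect trivially and `{f i : i ∈ ϱ₂}` is linearly
independent, then the canonical dual is the unique 1-erasure probabilistic optimal dual of
`F`: every dual `G` of `F` with `max_i q i ‖f i‖ ‖g i‖ = c` satisfies `g i = S⁻¹ f i` for
all `i`. -/
theorem canonical_dual_unique_one_erasure_optimal {H : Type*} [NormedAddCommGroup H]
    [InnerProductSpace ℂ H] [FiniteDimensional ℂ H] {n N : ℕ}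
    (hn : 1 ≤ n) (hdim : Module.finrank ℂ H = n)
    (p : Fin N → ℝ) (hp0 : ∀ i, 0 ≤ p i) (hp1 : ∀ i, p i < 1) (hpsum : ∑ i, p i = 1)
    (q : Fin N → ℝ) (hq : ∀ i, q i = ((N : ℝ) - 1) / ((n : ℝ) * (1 - p i)))
    (F : Fin N → H) (hspan : Submodule.span ℂ (Set.range F) = ⊤)
    (S Sinv : H →ₗ[ℂ] H)
    (hS : ∀ f : H, S f = ∑ i, ⟪F i, f⟫_ℂ • F i)
    (hSinv : ∀ f : H, S (Sinv f) = f ∧ Sinv (S f) = f)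
    (c : ℝ)
    (hc : IsGreatest (Set.range fun i => q i * ‖F i‖ * ‖Sinv (F i)‖) c)
    (hsep : Submodule.span ℂ (F '' {i | q i * ‖F i‖ * ‖Sinv (F i)‖ = c}) ⊓
        Submodule.span ℂ (F '' {i | q i * ‖F i‖ * ‖Sinv (F i)‖ ≠ c}) = ⊥)
    (hli : LinearIndependent ℂ
      (fun i : {i : Fin N // q i * ‖F i‖ * ‖Sinv (F i)‖ ≠ c} => F i)) :
    ∀ G : Fin N → H, (∀ f : H, ∑ i, ⟪F i, f⟫_ℂ • G i = f) →
      IsGreatest (Set.range fun i => q i * ‖F i‖ * ‖G i‖) c →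
      ∀ i, G i = Sinv (F i) := by
  intro G hG hGc
  have hdual : ∀ f : H, ∑ i, ⟪F i, f⟫_ℂ • Sinv (F i) = f := by
    intro f
    have h := (hSinv f).2
    rw [hS] at h
    simpa only [map_sum, map_smul] using h
  have hu : ∀ f : H, ∑ i, ⟪F i, f⟫_ℂ • (G i - Sinv (F i)) = 0 := by
    intro f
    simp only [smul_sub, Finset.sum_sub_distrib, hG, hdual, sub_self]
  -- A single index would carry the whole probability mass, contradicting `p i < 1`.
  have hN : 1 < N := by
    by_contra! h
    interval_cases N
    · simp at hpsum
    · have := hp1 0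
      simp at hpsum
      linarith
  have hqpos : ∀ i, 0 < q i := by
    intro i
    rw [hq]
    have h1 : (1 : ℝ) < N := by exact_mod_cast hN
    have h2 : (0 : ℝ) < n := by exact_mod_cast hn
    have h3 := hp1 i
    exact div_pos (by linarith) (mul_pos h2 (by linarith))
  have hinj : ∀ x, Sinv x = 0 → x = 0 := by
    intro x hx
    rw [← (hSinv x).1, hx, map_zero]
  have hcpos : 0 < c := by
    obtain ⟨i, hi⟩ : ∃ i, F i ≠ 0 := by
      by_contra! h
      have hbot : (⊤ : Submodule ℂ H) = ⊥ := by
        rw [← hspan, Submodule.span_eq_bot]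
        rintro _ ⟨i, rfl⟩
        exact h i
      have h0 : Module.finrank ℂ H = 0 := by
        rw [← finrank_top ℂ H, hbot, finrank_bot]
      omega
    have hi' : Sinv (F i) ≠ 0 := fun h => hi (hinj _ h)
    have := mul_pos (mul_pos (hqpos i) (norm_pos_iff.2 hi)) (norm_pos_iff.2 hi')
    exact lt_of_lt_of_le this (hc.2 ⟨i, rfl⟩)
  have hoff : ∀ i, q i * ‖F i‖ * ‖Sinv (F i)‖ ≠ c → G i - Sinv (F i) = 0 := by
    intro i hi
    refine ext_inner_right ℂ fun v => ?_
    rw [inner_zero_left]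
    exact coeff_eq_zero_of_disjoint (P := fun i => q i * ‖F i‖ * ‖Sinv (F i)‖ = c)
      (a := fun i => ⟪G i - Sinv (F i), v⟫_ℂ) hsep hli (sum_inner_smul_eq_zero_swap hu v) hi
  have hle : ∀ i, ‖G i‖ ≤ ‖Sinv (F i)‖ := by
    intro i
    by_cases hi : q i * ‖F i‖ * ‖Sinv (F i)‖ = c
    · have hpos : 0 < q i * ‖F i‖ :=
        pos_of_mul_pos_left (by rw [hi]; exact hcpos) (norm_nonneg (Sinv (F i)))
      refine le_of_mul_le_mul_left ?_ hpos
      rw [hi]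
      exact hGc.2 ⟨i, rfl⟩
    · rw [sub_eq_zero.1 (hoff i hi)]
  have hterm : ∀ i, ‖G i - Sinv (F i)‖ ^ 2
      + 2 * (⟪Sinv (F i), G i - Sinv (F i)⟫_ℂ).re ≤ 0 := by
    intro i
    have h := norm_add_sq (𝕜 := ℂ) (Sinv (F i)) (G i - Sinv (F i))
    rw [add_sub_cancel, RCLike.re_eq_complex_re] at h
    have h2 := pow_le_pow_left₀ (norm_nonneg _) (hle i) 2
    linarith
  have htr : ∑ i, (⟪Sinv (F i), G i - Sinv (F i)⟫_ℂ).re = 0 := by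
    rw [← Complex.re_sum, sum_inner_map_eq_zero hu Sinv, Complex.zero_re]
  have hsum : ∑ i, ‖G i - Sinv (F i)‖ ^ 2 ≤ 0 := by
    have h := Finset.sum_nonpos fun i (_ : i ∈ Finset.univ) => hterm i
    rwa [Finset.sum_add_distrib, ← Finset.mul_sum, htr, mul_zero, add_zero] at h
  intro i
  have h := (Finset.sum_eq_zero_iff_of_nonneg fun i _ => sq_nonneg ‖G i - Sinv (F i)‖).1
    (le_antisymm hsum (Finset.sum_nonneg fun i _ => sq_nonneg _)) i (Finset.mem_univ i)
  exact sub_eq_zero.1 (norm_eq_zero.1 (pow_eq_zero_iff two_ne_zero |>.1 h))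
end

section
/- Let (q_i) be the weight numbers of a probability sequence for an n-dimensional complex Hilbert space H. Then for every dual pair (F,G) of N-element families in H, max_{1 ≤ i ≤ N} q_i ‖f_i‖ ‖g_i‖ ≥ 1; moreover, max_{1 ≤ i ≤ N} q_i ‖f_i‖ ‖g_i‖ = 1 if and only if ⟨f_i, g_i⟩ = ‖f_i‖ ‖g_i‖ = 1/q_i for every 1 ≤ i ≤ N. -/
/-!
The trace of the identity `f = ∑ ⟪F i, f⟫ G i` gives `∑ ⟪F i, G i⟫ = n`, while the definition of the
weight numbers gives `∑ 1 / q i = n`. Hence, with `M = max q i ‖F i‖ ‖G i‖`,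
`n = ∑ Re ⟪F i, G i⟫ ≤ ∑ ‖F i‖ ‖G i‖ ≤ M ∑ 1 / q i = M n`, so `1 ≤ M`. If `M = 1`, then
`Re ⟪F i, G i⟫ ≤ ‖F i‖ ‖G i‖ ≤ 1 / q i` holds termwise while the outer sums agree, so every term is
an equality; a complex number whose real part is at least its modulus is real.
-/

open scoped InnerProductSpace

/-- The maximum of a real-valued function on the (nonempty) index set `Fin N`. -/
noncomputable def finMax {N : ℕ} (hN : 0 < N) (f : Fin N → ℝ) : ℝ :=
  Finset.univ.sup' (Finset.univ_nonempty_iff.mpr (Fin.pos_iff_nonempty.mp hN)) f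

/-- The trace of the reconstruction identity of a dual pair. -/
lemma dual_pair_sum_inner {H : Type*} [NormedAddCommGroup H]
    [InnerProductSpace ℂ H] [FiniteDimensional ℂ H] {N : ℕ} (F G : Fin N → H)
    (hdual : ∀ f : H, ∑ i, ⟪F i, f⟫_ℂ • G i = f) :
    ∑ i, ⟪F i, G i⟫_ℂ = (Module.finrank ℂ H : ℂ) := by
  have h : (∑ i, (innerSL ℂ (F i)).toLinearMap.smulRight (G i)) = (LinearMap.id : H →ₗ[ℂ] H) := by
    ext f
    simpa [LinearMap.sum_apply] using hdual f
  have h2 := congrArg (LinearMap.trace ℂ H) h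
  rw [map_sum, LinearMap.trace_id] at h2
  simpa [LinearMap.trace_smulRight] using h2

/-- The weight numbers are positive, and their reciprocals sum to the dimension. -/
lemma weight_pos_and_sum_inv {n N : ℕ} (hn : 1 ≤ n)
    (p : Fin N → ℝ) (hp1 : ∀ i, p i < 1) (hpsum : ∑ i, p i = 1)
    (q : Fin N → ℝ) (hq : ∀ i, q i = ((N : ℝ) - 1) / ((n : ℝ) * (1 - p i))) :
    (∀ i, 0 < q i) ∧ ∑ i, 1 / q i = n := by
  have hn' : (0 : ℝ) < n := by exact_mod_cast hn
  -- a single index would force its probability to be `1`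
  have hN2 : 2 ≤ N := by
    by_contra! h
    interval_cases N
    · simp at hpsum
    · have := hp1 0
      simp at hpsum
      linarith
  have hN' : (0 : ℝ) < (N : ℝ) - 1 := by
    have : (2 : ℝ) ≤ N := by exact_mod_cast hN2
    linarith
  refine ⟨fun i => ?_, ?_⟩
  · rw [hq i]
    have := hp1 i
    exact div_pos hN' (mul_pos hn' (by linarith))
  · have h : ∀ i, 1 / q i = (n / ((N : ℝ) - 1)) * (1 - p i) := fun i => by
      rw [hq i, one_div_div]
      ring
    simp only [h]
    rw [← Finset.mul_sum, Finset.sum_sub_distrib, hpsum]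
    simp
    field_simp

/-- For weight numbers `q` of a probability sequence on an `n`-dimensional
complex Hilbert space, every dual pair `(F,G)` satisfies `max_i q i ‖f i‖ ‖g i‖ ≥ 1`, with
equality iff `⟨f i, g i⟩ = ‖f i‖ ‖g i‖ = 1 / q i` for every `i`.
Paper's `⟨f i, g i⟩` (linear in the first argument) is Mathlib's `⟪G i, F i⟫_ℂ`. -/
theorem operator_norm_one_erasure_lower_bound {H : Type*} [NormedAddCommGroup H]
    [InnerProductSpace ℂ H] [FiniteDimensional ℂ H] {n N : ℕ}
    (hn : 1 ≤ n) (hdim : Module.finrank ℂ H = n) (hN : 0 < N)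
    (p : Fin N → ℝ) (hp0 : ∀ i, 0 ≤ p i) (hp1 : ∀ i, p i < 1) (hpsum : ∑ i, p i = 1)
    (q : Fin N → ℝ) (hq : ∀ i, q i = ((N : ℝ) - 1) / ((n : ℝ) * (1 - p i)))
    (F G : Fin N → H)
    (hdual : ∀ f : H, ∑ i, ⟪F i, f⟫_ℂ • G i = f) :
    1 ≤ finMax hN (fun i => q i * ‖F i‖ * ‖G i‖) ∧
    (finMax hN (fun i => q i * ‖F i‖ * ‖G i‖) = 1 ↔
      ∀ i, ⟪G i, F i⟫_ℂ = ((1 / q i : ℝ) : ℂ) ∧ ‖F i‖ * ‖G i‖ = 1 / q i) := by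
  have hn' : (0 : ℝ) < n := by exact_mod_cast hn
  obtain ⟨hqpos, hqsum⟩ := weight_pos_and_sum_inv hn p hp1 hpsum q hq
  have htr : ∑ i, (⟪F i, G i⟫_ℂ).re = n := by
    have h := congrArg Complex.re (dual_pair_sum_inner F G hdual)
    rw [hdim, Complex.re_sum] at h
    simpa using h
  have hre : ∀ i, (⟪F i, G i⟫_ℂ).re ≤ ‖F i‖ * ‖G i‖ := fun i =>
    (Complex.re_le_norm _).trans (norm_inner_le_norm _ _)
  have hle : ∀ i, q i * ‖F i‖ * ‖G i‖ ≤ finMax hN (fun i => q i * ‖F i‖ * ‖G i‖) := fun i =>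
    Finset.le_sup' (fun i => q i * ‖F i‖ * ‖G i‖) (Finset.mem_univ i)
  set M := finMax hN (fun i => q i * ‖F i‖ * ‖G i‖) with hM
  have hMi : ∀ i, ‖F i‖ * ‖G i‖ ≤ M * (1 / q i) := fun i => by
    rw [mul_one_div, le_div_iff₀ (hqpos i)]
    linarith [hle i]
  have hone : 1 ≤ M := by
    have h : (n : ℝ) ≤ M * n := by
      calc (n : ℝ) = ∑ i, (⟪F i, G i⟫_ℂ).re := htr.symm
        _ ≤ ∑ i, M * (1 / q i) := Finset.sum_le_sum fun i _ => (hre i).trans (hMi i)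
        _ = M * n := by rw [← Finset.mul_sum, hqsum]
    exact le_of_mul_le_mul_right (by linarith) hn'
  refine ⟨hone, fun h1 i => ?_, fun h => le_antisymm ?_ hone⟩
  · simp only [h1, one_mul] at hMi
    have heq := (Finset.sum_eq_sum_iff_of_le fun i _ => (hre i).trans (hMi i)).1
      (htr.trans hqsum.symm) i (Finset.mem_univ i)
    have hnorm : ‖F i‖ * ‖G i‖ = 1 / q i := le_antisymm (hMi i) (heq ▸ hre i)
    have hreal : (⟪F i, G i⟫_ℂ).re = ‖⟪F i, G i⟫_ℂ‖ :=
      le_antisymm (Complex.re_le_norm _) (by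
        rw [heq, ← hnorm]
        exact norm_inner_le_norm _ _)
    have him : (⟪F i, G i⟫_ℂ).im = 0 := (Complex.nonneg_iff.1 (Complex.re_eq_norm.1 hreal)).2.symm
    refine ⟨?_, hnorm⟩
    rw [← inner_conj_symm]
    apply Complex.ext
    · rw [Complex.conj_re, heq, Complex.ofReal_re]
    · rw [Complex.conj_im, him, Complex.ofReal_im, neg_zero]
  · refine Finset.sup'_le _ _ fun i _ => ?_
    rw [mul_assoc, (h i).2, mul_one_div_cancel (hqpos i).ne']
end
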